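/- Let N ≥ 1 and k ≥ 0 be integers. There exists a constant C = C(k, N) > 0 such that for every compactly supported u ∈ H^1(ℝ^N), ‖u‖_{L^2} ≤ C ‖∇u‖_{L^2}^{1 - 1/2^k} ‖ |x|^{2^k - 1} u ‖_{L^2}^{1/2^k}. -/

import Mathlib

open MeasureTheory

/-!
Fix `v` and a functional `ℓ` with `ℓ v = 1`, and write `|·|` for pointwise and `‖·‖` for `L²` norms.
Since `1/2 - |t|^(2m) ≤ arctan' t`, integrating `∂ᵥ (arctan ∘ ℓ) * |u|²` by parts and applying
Cauchy–Schwarz gives `‖u‖² / 2 - ‖|ℓ|^m u‖² ≤ π ‖u‖ ‖∂ᵥ u‖`, hence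
`‖u‖ ≤ 2π (‖∂ᵥ u‖ + ‖|ℓ|^m u‖)`. Replacing `(v, ℓ)` by `(r v, ℓ / r)` turns this into
`‖u‖ ≤ 2π (r ‖∂ᵥ u‖ + r^(-m) ‖|ℓ|^m u‖)` for every `r > 0`. The two terms balance at
`r^(m+1) = ‖|ℓ|^m u‖ / ‖∂ᵥ u‖`, which yields the interpolation inequality for every real `m ≥ 0`
with the constant `4π`. Finally `|ℓ x| ≤ |x|` if `ℓ` has norm one.
-/

open scoped Real

section Scalar

lemma half_sub_sq_rpow_abs_le_inv_one_add_sq {m : ℝ} (hm : 0 ≤ m) (t : ℝ) :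
    1 / 2 - (|t| ^ m) ^ 2 ≤ 1 / (1 + t ^ 2) := by
  rcases le_total |t| 1 with ht | ht
  · have ht_sq : t ^ 2 ≤ 1 := (sq_le_one_iff_abs_le_one t).2 ht
    calc 1 / 2 - (|t| ^ m) ^ 2 ≤ 1 / 2 := sub_le_self _ (sq_nonneg _)
      _ ≤ 1 / (1 + t ^ 2) := one_div_le_one_div_of_le (by positivity) (by linarith)
  · have hpow : 1 ≤ (|t| ^ m) ^ 2 := one_le_pow₀ (Real.one_le_rpow ht hm)
    have hinv : 0 ≤ 1 / (1 + t ^ 2) := by positivity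
    linarith

lemma one_sub_one_div_add_one_nonneg {m : ℝ} (hm : 0 ≤ m) : 0 ≤ 1 - 1 / (m + 1) :=
  sub_nonneg.2 (div_le_one_of_le₀ (by linarith) (by positivity))

lemma le_add_of_sq_le_mul_add_sq {a p q : ℝ} (hp : 0 ≤ p) (hq : 0 ≤ q)
    (h : a ^ 2 ≤ p * a + q ^ 2) : a ≤ p + q := by
  by_contra! hlt
  nlinarith

lemma div_rpow_mul_add_div_rpow_neg_mul {m a b : ℝ} (hm : m + 1 ≠ 0) (ha : 0 < a) (hb : 0 < b) :
    (b / a) ^ (1 / (m + 1)) * a + ((b / a) ^ (1 / (m + 1))) ^ (-m) * b =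
      2 * (a ^ (1 - 1 / (m + 1)) * b ^ (1 / (m + 1))) := by
  have hfirst : (b / a) ^ (1 / (m + 1)) * a = a ^ (1 - 1 / (m + 1)) * b ^ (1 / (m + 1)) := by
    rw [Real.div_rpow hb.le ha.le, Real.rpow_sub ha, Real.rpow_one]
    ring
  have hsecond : ((b / a) ^ (1 / (m + 1))) ^ (-m) * b =
      a ^ (1 - 1 / (m + 1)) * b ^ (1 / (m + 1)) := by
    have hexp : 1 / (m + 1) * -m = 1 / (m + 1) - 1 := by field_simp; ring
    rw [← Real.rpow_mul (by positivity), hexp, Real.div_rpow hb.le ha.le, Real.rpow_sub hb,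
      Real.rpow_one, ← neg_sub 1 (1 / (m + 1)), Real.rpow_neg ha.le]
    field_simp
  rw [hfirst, hsecond, two_mul]

lemma le_two_mul_rpow_mul_rpow_of_forall_le_mul_add {m a b c : ℝ} (hm : 0 ≤ m) (ha : 0 ≤ a)
    (hb : 0 ≤ b) (h : ∀ r > 0, c ≤ r * a + r ^ (-m) * b) :
    c ≤ 2 * (a ^ (1 - 1 / (m + 1)) * b ^ (1 / (m + 1))) := by
  have hθ := one_sub_one_div_add_one_nonneg hm
  -- If `a` or `b` vanishes there is no optimal `r`, so both are first made positive.
  have hpert : ∀ ε > 0, c ≤ 2 * ((a + ε) ^ (1 - 1 / (m + 1)) * (b + ε) ^ (1 / (m + 1))) := by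
    intro ε hε
    rw [← div_rpow_mul_add_div_rpow_neg_mul (by positivity) (by positivity) (by positivity)]
    have hr : 0 < ((b + ε) / (a + ε)) ^ (1 / (m + 1)) := by positivity
    refine (h _ hr).trans ?_
    gcongr <;> linarith
  have hcont : Continuous fun ε : ℝ ↦
      2 * ((a + ε) ^ (1 - 1 / (m + 1)) * (b + ε) ^ (1 / (m + 1))) :=
    continuous_const.mul <|
      ((Real.continuous_rpow_const hθ).comp (continuous_const.add continuous_id)).mul <|
        (Real.continuous_rpow_const (by positivity)).comp (continuous_const.add continuous_id)
  have hlim := (hcont.tendsto 0).mono_left (nhdsWithin_le_nhds (s := Set.Ioi 0))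
  simp only [add_zero] at hlim
  exact ge_of_tendsto hlim (eventually_mem_nhdsWithin.mono hpert)

end Scalar

section LpNormTwo

variable {α F G : Type*} [MeasurableSpace α] {μ : Measure α} [NormedAddCommGroup F]
  [NormedAddCommGroup G]

lemma lpNorm_two_eq_integral_rpow {f : α → F} (hf : AEStronglyMeasurable f μ) :
    lpNorm f 2 μ = (∫ x, ‖f x‖ ^ 2 ∂μ) ^ ((1 : ℝ) / 2) := by
  simpa using lpNorm_eq_integral_norm_rpow_toReal two_ne_zero ENNReal.ofNat_ne_top hf

lemma lpNorm_two_sq {f : α → F} (hf : AEStronglyMeasurable f μ) :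
    lpNorm f 2 μ ^ 2 = ∫ x, ‖f x‖ ^ 2 ∂μ := by
  rw [lpNorm_two_eq_integral_rpow hf, ← Real.sqrt_eq_rpow, Real.sq_sqrt (by positivity)]

lemma integral_norm_mul_norm_le_lpNorm_mul_lpNorm {f : α → F} {g : α → G} (hf : MemLp f 2 μ)
    (hg : MemLp g 2 μ) :
    ∫ x, ‖f x‖ * ‖g x‖ ∂μ ≤ lpNorm f 2 μ * lpNorm g 2 μ := by
  rw [lpNorm_two_eq_integral_rpow hf.1, lpNorm_two_eq_integral_rpow hg.1]
  simpa using integral_mul_norm_le_Lp_mul_Lq Real.HolderConjugate.two_two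
    (f := fun x ↦ ‖f x‖) (g := fun x ↦ ‖g x‖) (by simpa using hf.norm) (by simpa using hg.norm)

lemma integrable_inv_one_add_sq_mul_norm_sq {g : α → ℝ} {u : α → F}
    (hg : AEStronglyMeasurable g μ) (hu : MemLp u 2 μ) :
    Integrable (fun x ↦ 1 / (1 + g x ^ 2) * ‖u x‖ ^ 2) μ := by
  refine hu.norm.integrable_sq.bdd_mul (c := 1) ?_ (ae_of_all _ fun x ↦ ?_)
  · exact (aemeasurable_const.div (aemeasurable_const.add
      (hg.aemeasurable.pow_const 2))).aestronglyMeasurable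
  · rw [Real.norm_of_nonneg (by positivity)]
    exact div_le_one_of_le₀ (by linarith [sq_nonneg (g x)]) (by positivity)

lemma half_lpNorm_sq_sub_le_integral_inv_one_add_sq [NormedSpace ℝ F] {m : ℝ} (hm : 0 ≤ m)
    {g : α → ℝ} {u : α → F} (hg : AEStronglyMeasurable g μ) (hu : MemLp u 2 μ)
    (hgu : MemLp (fun x ↦ |g x| ^ m • u x) 2 μ) :
    lpNorm u 2 μ ^ 2 / 2 - lpNorm (fun x ↦ |g x| ^ m • u x) 2 μ ^ 2 ≤
      ∫ x, 1 / (1 + g x ^ 2) * ‖u x‖ ^ 2 ∂μ := by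
  rw [lpNorm_two_sq hu.1, lpNorm_two_sq hgu.1, ← integral_div,
    ← integral_sub (hu.norm.integrable_sq.div_const 2) hgu.norm.integrable_sq]
  refine integral_mono ((hu.norm.integrable_sq.div_const 2).sub hgu.norm.integrable_sq)
    (integrable_inv_one_add_sq_mul_norm_sq hg hu) fun x ↦ ?_
  calc ‖u x‖ ^ 2 / 2 - ‖|g x| ^ m • u x‖ ^ 2
      = (1 / 2 - (|g x| ^ m) ^ 2) * ‖u x‖ ^ 2 := by
        rw [norm_smul, Real.norm_of_nonneg (by positivity)]
        ring
    _ ≤ 1 / (1 + g x ^ 2) * ‖u x‖ ^ 2 := by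
        gcongr
        exact half_sub_sq_rpow_abs_le_inv_one_add_sq hm (g x)

end LpNormTwo

variable {E F : Type*} [NormedAddCommGroup E] [NormedSpace ℝ E] [FiniteDimensional ℝ E]
  [MeasurableSpace E] [BorelSpace E] {μ : Measure E} [μ.IsAddHaarMeasure]
  [NormedAddCommGroup F] [InnerProductSpace ℝ F] {u : E → F} {ℓ : StrongDual ℝ E} {v : E} {m : ℝ}

lemma integral_fderiv_mul_norm_sq_le {f : E → ℝ} {M : ℝ} (hf : Differentiable ℝ f)
    (hfM : ∀ x, |f x| ≤ M) (hf' : Integrable (fun x ↦ fderiv ℝ f x v * ‖u x‖ ^ 2) μ)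
    (hu : Differentiable ℝ u) (hu2 : MemLp u 2 μ) (hdu : MemLp (fun x ↦ fderiv ℝ u x v) 2 μ) :
    ∫ x, fderiv ℝ f x v * ‖u x‖ ^ 2 ∂μ ≤
      2 * M * (lpNorm u 2 μ * lpNorm (fun x ↦ fderiv ℝ u x v) 2 μ) := by
  have hM : 0 ≤ M := (abs_nonneg _).trans (hfM 0)
  have hf_meas : AEStronglyMeasurable f μ := hf.continuous.aestronglyMeasurable
  have hdu_sq : ∀ x, fderiv ℝ (fun y ↦ ‖u y‖ ^ 2) x v = 2 * inner ℝ (u x) (fderiv ℝ u x v) :=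
    fun x ↦ by simp [(hu x).hasFDerivAt.norm_sq.fderiv]
  have hnorms : Integrable (fun x ↦ ‖u x‖ * ‖fderiv ℝ u x v‖) μ := hu2.norm.integrable_mul hdu.norm
  have hinner : Integrable (fun x ↦ 2 * inner ℝ (u x) (fderiv ℝ u x v)) μ :=
    (hnorms.mono (hu2.1.inner hdu.1) (ae_of_all _ fun x ↦ by
      simpa using abs_real_inner_le_norm (u x) (fderiv ℝ u x v))).const_mul 2
  have hparts := integral_mul_fderiv_eq_neg_fderiv_mul_of_integrable hf'
    (by simpa only [hdu_sq] using hinner.bdd_mul hf_meas (ae_of_all _ hfM))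
    (hu2.norm.integrable_sq.bdd_mul hf_meas (ae_of_all _ hfM))
    (fun x _ ↦ hf x) (fun x _ ↦ (hu x).norm_sq ℝ)
  calc ∫ x, fderiv ℝ f x v * ‖u x‖ ^ 2 ∂μ
      = ∫ x, -(f x * (2 * inner ℝ (u x) (fderiv ℝ u x v))) ∂μ := by
        rw [integral_neg, eq_neg_iff_add_eq_zero, add_comm, ← eq_neg_iff_add_eq_zero, ← hparts]
        simp only [hdu_sq]
    _ ≤ ∫ x, 2 * M * (‖u x‖ * ‖fderiv ℝ u x v‖) ∂μ := by
        refine integral_mono (hinner.bdd_mul hf_meas (ae_of_all _ hfM)).neg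
          (hnorms.const_mul _) fun x ↦ ?_
        calc -(f x * (2 * inner ℝ (u x) (fderiv ℝ u x v)))
            ≤ |f x| * (2 * |inner ℝ (u x) (fderiv ℝ u x v)|) := by
              refine (neg_le_abs _).trans_eq ?_
              rw [abs_mul, abs_mul, abs_two]
          _ ≤ M * (2 * (‖u x‖ * ‖fderiv ℝ u x v‖)) := by
              gcongr
              exacts [hfM x, abs_real_inner_le_norm _ _]
          _ = 2 * M * (‖u x‖ * ‖fderiv ℝ u x v‖) := by ring
    _ ≤ 2 * M * (lpNorm u 2 μ * lpNorm (fun x ↦ fderiv ℝ u x v) 2 μ) := by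
        rw [integral_const_mul]
        gcongr
        exact integral_norm_mul_norm_le_lpNorm_mul_lpNorm hu2 hdu

lemma integral_inv_one_add_sq_mul_norm_sq_le (hℓv : ℓ v = 1) (hu : Differentiable ℝ u)
    (hu2 : MemLp u 2 μ) (hdu : MemLp (fun x ↦ fderiv ℝ u x v) 2 μ) :
    ∫ x, 1 / (1 + ℓ x ^ 2) * ‖u x‖ ^ 2 ∂μ ≤
      π * (lpNorm u 2 μ * lpNorm (fun x ↦ fderiv ℝ u x v) 2 μ) := by
  have harctan_fderiv : ∀ x, fderiv ℝ (fun y ↦ Real.arctan (ℓ y)) x v = 1 / (1 + ℓ x ^ 2) :=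
    fun x ↦ by simp [ℓ.hasFDerivAt.arctan.fderiv, hℓv]
  have harctan_le : ∀ x, |Real.arctan (ℓ x)| ≤ π / 2 := fun x ↦
    abs_le.2 ⟨(Real.neg_pi_div_two_lt_arctan _).le, (Real.arctan_lt_pi_div_two _).le⟩
  have hint : Integrable (fun x ↦ 1 / (1 + ℓ x ^ 2) * ‖u x‖ ^ 2) μ :=
    integrable_inv_one_add_sq_mul_norm_sq ℓ.continuous.aestronglyMeasurable hu2
  have hbound := integral_fderiv_mul_norm_sq_le (f := fun x ↦ Real.arctan (ℓ x))
    ℓ.differentiable.arctan harctan_le (by simpa only [harctan_fderiv] using hint) hu hu2 hdu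
  simpa only [harctan_fderiv, mul_div_cancel₀ π two_ne_zero] using hbound

lemma lpNorm_two_le_lpNorm_fderiv_add_lpNorm_abs_rpow_smul (hℓv : ℓ v = 1) (hm : 0 ≤ m)
    (hu : Differentiable ℝ u) (hu2 : MemLp u 2 μ) (hdu : MemLp (fun x ↦ fderiv ℝ u x v) 2 μ)
    (hℓu : MemLp (fun x ↦ |ℓ x| ^ m • u x) 2 μ) :
    lpNorm u 2 μ ≤ 2 * π * (lpNorm (fun x ↦ fderiv ℝ u x v) 2 μ +
      lpNorm (fun x ↦ |ℓ x| ^ m • u x) 2 μ) := by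
  have hlower := half_lpNorm_sq_sub_le_integral_inv_one_add_sq hm
    ℓ.continuous.aestronglyMeasurable hu2 hℓu
  have hupper := integral_inv_one_add_sq_mul_norm_sq_le hℓv hu hu2 hdu
  set b := lpNorm (fun x ↦ |ℓ x| ^ m • u x) 2 μ
  have hb : 2 * b ^ 2 ≤ (2 * π * b) ^ 2 := by
    nlinarith [mul_nonneg (sq_nonneg b) (by nlinarith [Real.pi_gt_three] : 0 ≤ 4 * π ^ 2 - 2)]
  rw [mul_add]
  refine le_add_of_sq_le_mul_add_sq (mul_nonneg (by positivity) lpNorm_nonneg)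
    (mul_nonneg (by positivity) lpNorm_nonneg) ?_
  linarith

lemma lpNorm_two_le_mul_lpNorm_fderiv_add_mul_lpNorm_abs_rpow_smul (hℓv : ℓ v = 1) (hm : 0 ≤ m)
    (hu : Differentiable ℝ u) (hu2 : MemLp u 2 μ) (hdu : MemLp (fun x ↦ fderiv ℝ u x v) 2 μ)
    (hℓu : MemLp (fun x ↦ |ℓ x| ^ m • u x) 2 μ) {r : ℝ} (hr : 0 < r) :
    lpNorm u 2 μ ≤ 2 * π * (r * lpNorm (fun x ↦ fderiv ℝ u x v) 2 μ +
      r ^ (-m) * lpNorm (fun x ↦ |ℓ x| ^ m • u x) 2 μ) := by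
  have hfderiv : (fun x ↦ fderiv ℝ u x (r • v)) = r • fun x ↦ fderiv ℝ u x v := by
    ext x
    simp
  have hweight : (fun x ↦ |(r⁻¹ • ℓ) x| ^ m • u x) = r ^ (-m) • fun x ↦ |ℓ x| ^ m • u x := by
    ext x
    simp [abs_mul, abs_of_pos hr, Real.mul_rpow, hr.le, Real.inv_rpow, Real.rpow_neg, mul_smul]
  have hscaled := lpNorm_two_le_lpNorm_fderiv_add_lpNorm_abs_rpow_smul (ℓ := r⁻¹ • ℓ)
    (v := r • v) (by simp [hℓv, hr.ne']) hm hu hu2 (hfderiv ▸ hdu.const_smul r)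
    (hweight ▸ hℓu.const_smul (r ^ (-m)))
  rw [hfderiv, hweight, lpNorm_const_smul, lpNorm_const_smul] at hscaled
  simpa [abs_of_pos, hr, Real.rpow_pos_of_pos] using hscaled

theorem lpNorm_two_le_lpNorm_fderiv_rpow_mul_lpNorm_abs_rpow_smul_rpow (hℓv : ℓ v = 1) (hm : 0 ≤ m)
    (hu : Differentiable ℝ u) (hu2 : MemLp u 2 μ) (hdu : MemLp (fun x ↦ fderiv ℝ u x v) 2 μ)
    (hℓu : MemLp (fun x ↦ |ℓ x| ^ m • u x) 2 μ) :
    lpNorm u 2 μ ≤ 4 * π * (lpNorm (fun x ↦ fderiv ℝ u x v) 2 μ ^ (1 - 1 / (m + 1)) *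
      lpNorm (fun x ↦ |ℓ x| ^ m • u x) 2 μ ^ (1 / (m + 1))) := by
  have hopt := le_two_mul_rpow_mul_rpow_of_forall_le_mul_add (c := lpNorm u 2 μ / (2 * π)) hm
    lpNorm_nonneg lpNorm_nonneg fun r hr ↦ (div_le_iff₀' (by positivity)).2 <|
      lpNorm_two_le_mul_lpNorm_fderiv_add_mul_lpNorm_abs_rpow_smul hℓv hm hu hu2 hdu hℓu hr
  rw [div_le_iff₀' (by positivity)] at hopt
  linarith

theorem lpNorm_two_le_lpNorm_fderiv_rpow_mul_lpNorm_norm_rpow_smul_rpow [Nontrivial E] (hm : 0 ≤ m)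
    (hu : Differentiable ℝ u) (hu2 : MemLp u 2 μ) (hdu : MemLp (fderiv ℝ u) 2 μ)
    (hwu : MemLp (fun x ↦ ‖x‖ ^ m • u x) 2 μ) :
    lpNorm u 2 μ ≤ 4 * π * (lpNorm (fderiv ℝ u) 2 μ ^ (1 - 1 / (m + 1)) *
      lpNorm (fun x ↦ ‖x‖ ^ m • u x) 2 μ ^ (1 / (m + 1))) := by
  obtain ⟨v, hv⟩ := exists_norm_eq E zero_le_one
  obtain ⟨ℓ, hℓ, hℓv⟩ := exists_dual_vector'' ℝ v
  have hθ := one_sub_one_div_add_one_nonneg hm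
  have hfderiv_le : ∀ x, ‖fderiv ℝ u x v‖ ≤ ‖fderiv ℝ u x‖ := fun x ↦ by
    simpa [hv] using (fderiv ℝ u x).le_opNorm v
  have hweight_le : ∀ x, ‖|ℓ x| ^ m • u x‖ ≤ ‖‖x‖ ^ m • u x‖ := fun x ↦ by
    have hℓx : |ℓ x| ≤ ‖x‖ := by simpa using ℓ.le_of_opNorm_le hℓ x
    simp only [norm_smul, Real.norm_of_nonneg (Real.rpow_nonneg (abs_nonneg _) m),
      Real.norm_of_nonneg (Real.rpow_nonneg (norm_nonneg _) m)]
    gcongr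
  have hdvu : MemLp (fun x ↦ fderiv ℝ u x v) 2 μ :=
    hdu.mono (hdu.1.apply_continuousLinearMap v)
      (ae_of_all _ hfderiv_le)
  have hℓu : MemLp (fun x ↦ |ℓ x| ^ m • u x) 2 μ :=
    hwu.mono ((ℓ.continuous.abs.rpow_const fun _ ↦ .inr hm).aestronglyMeasurable.smul hu2.1)
      (ae_of_all _ hweight_le)
  have hfderiv_lpNorm : lpNorm (fun x ↦ fderiv ℝ u x v) 2 μ ≤ lpNorm (fderiv ℝ u) 2 μ :=
    (lpNorm_mono_real hdu.norm hfderiv_le).trans_eq (lpNorm_norm hdu.1 2)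
  have hweight_lpNorm :
      lpNorm (fun x ↦ |ℓ x| ^ m • u x) 2 μ ≤ lpNorm (fun x ↦ ‖x‖ ^ m • u x) 2 μ :=
    (lpNorm_mono_real hwu.norm hweight_le).trans_eq (lpNorm_norm hwu.1 2)
  refine (lpNorm_two_le_lpNorm_fderiv_rpow_mul_lpNorm_abs_rpow_smul_rpow
    (by simp [hℓv, hv]) hm hu hu2 hdvu hℓu).trans ?_
  exact mul_le_mul_of_nonneg_left
    (mul_le_mul (Real.rpow_le_rpow lpNorm_nonneg hfderiv_lpNorm hθ)
      (Real.rpow_le_rpow lpNorm_nonneg hweight_lpNorm (by positivity))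
      (Real.rpow_nonneg lpNorm_nonneg _) (Real.rpow_nonneg lpNorm_nonneg _)) (by positivity)

theorem ckn_general_general [Nontrivial E] (hm : 0 ≤ m) (hu : Differentiable ℝ u)
    (hu2 : MemLp u 2 μ) (hdu : MemLp (fderiv ℝ u) 2 μ)
    (hwu : MemLp (fun x ↦ ‖x‖ ^ m • u x) 2 μ) :
    (∫ x, ‖u x‖ ^ 2 ∂μ) ^ ((1 : ℝ) / 2) ≤
      4 * π * ((∫ x, ‖fderiv ℝ u x‖ ^ 2 ∂μ) ^ ((1 : ℝ) / 2)) ^ (1 - 1 / (m + 1)) *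
        ((∫ x, ‖x‖ ^ (2 * m) * ‖u x‖ ^ 2 ∂μ) ^ ((1 : ℝ) / 2)) ^ (1 / (m + 1)) := by
  have hweight : ∀ x, ‖‖x‖ ^ m • u x‖ ^ 2 = ‖x‖ ^ (2 * m) * ‖u x‖ ^ 2 := fun x ↦ by
    rw [norm_smul, mul_pow, Real.norm_of_nonneg (by positivity), mul_comm 2 m,
      Real.rpow_mul (norm_nonneg x), Real.rpow_two]
  have hckn := lpNorm_two_le_lpNorm_fderiv_rpow_mul_lpNorm_norm_rpow_smul_rpow hm hu hu2 hdu hwu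
  rw [lpNorm_two_eq_integral_rpow hu2.1, lpNorm_two_eq_integral_rpow hdu.1,
    lpNorm_two_eq_integral_rpow hwu.1, ← mul_assoc] at hckn
  simpa only [hweight] using hckn

theorem ckn_general (N : ℕ) (hN : 1 ≤ N) (k : ℕ) :
    ∃ C > 0, ∀ u : EuclideanSpace ℝ (Fin N) → ℝ,
      ContDiff ℝ 1 u → HasCompactSupport u →
      (∫ x, (u x)^2) ^ ((1:ℝ)/2) ≤
        C * ((∫ x, ‖fderiv ℝ u x‖^2) ^ ((1:ℝ)/2)) ^ (1 - 1/(2:ℝ)^k) *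
          ((∫ x, ‖x‖ ^ (2*((2:ℝ)^k - 1)) * (u x)^2) ^ ((1:ℝ)/2)) ^ (1/(2:ℝ)^k) := by
  have : Nonempty (Fin N) := ⟨⟨0, hN⟩⟩
  refine ⟨4 * π, by positivity, fun u hu hc ↦ ?_⟩
  have hm : 0 ≤ (2 : ℝ) ^ k - 1 := sub_nonneg.2 (one_le_pow₀ one_le_two)
  have hweight : Continuous fun x : EuclideanSpace ℝ (Fin N) ↦ ‖x‖ ^ ((2 : ℝ) ^ k - 1) :=
    continuous_norm.rpow_const fun _ ↦ .inr hm
  simpa using ckn_general_general (μ := volume) hm (hu.differentiable one_ne_zero)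
    (hu.continuous.memLp_of_hasCompactSupport hc)
    ((hu.continuous_fderiv one_ne_zero).memLp_of_hasCompactSupport (hc.fderiv ℝ))
    ((hweight.smul hu.continuous).memLp_of_hasCompactSupport hc.smul_left)
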